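/- Let k be either the ring ℤ equipped with the usual archimedean absolute value, or a field equipped with the trivial absolute value (the absolute value which is 1 on all nonzero elements). Let A be a nonzero finitely generated k-algebra whose spectrum Spec A is connected. Let ℳ(A) denote the set of multiplicative seminorms on A bounded on k, i.e., maps |·| : A → ℝ satisfying |0| = 0, |1| = 1, |ab| = |a|·|b| and |a+b| ≤ |a| + |b| for all a, b ∈ A, and |c·1_A| ≤ |c|_k for every c ∈ k, where |·|_k is the given absolute value on k; equip ℳ(A) with the weakest topology for which the map |·| ↦ |a| is continuous for every a ∈ A. Then the topological space ℳ(A) is path-connected. -/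

import Mathlib

/-- The set of multiplicative seminorms on a `k`-algebra `A` that are bounded on `k` with respect
to a given absolute value `absk` on `k`: maps `φ : A → ℝ` with `φ 0 = 0`, `φ 1 = 1`,
`φ (a*b) = φ a * φ b`, `φ (a+b) ≤ φ a + φ b`, nonnegative values (seminorm), and
`φ (c • 1) ≤ absk c` for all `c : k`.  It is topologized as a subspace of `A → ℝ` with the
product topology, i.e. with the weakest topology making `φ ↦ φ a` continuous for all `a`. -/
def berkovichSpectrum (k A : Type*) [CommRing k] [CommRing A] [Algebra k A]
    (absk : k → ℝ) : Set (A → ℝ) :=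
  {φ | φ 0 = 0 ∧ φ 1 = 1 ∧ (∀ a b : A, φ (a * b) = φ a * φ b) ∧
    (∀ a b : A, φ (a + b) ≤ φ a + φ b) ∧ (∀ a : A, 0 ≤ φ a) ∧
    ∀ c : k, φ (algebraMap k A c) ≤ absk c}

section RankOne

variable {Γ : Type*} [LinearOrderedCommGroupWithZero Γ]

/-- The set of values `exp (-(n / m))` with `g ^ m ≤ γ ^ n`. -/
def comparisonSet (γ g : Γ) : Set ℝ :=
  {r | ∃ m n : ℕ, 0 < m ∧ g ^ m ≤ γ ^ n ∧ r = Real.exp (-(n / m : ℝ))}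

/-- The real-valued size of `g`, normalized so that `γ` has size `exp (-1)`. -/
noncomputable def realSize (γ g : Γ) : ℝ := sInf (comparisonSet γ g)

lemma comparisonSet_bddBelow (γ g : Γ) : BddBelow (comparisonSet γ g) :=
  ⟨0, by rintro r ⟨m, n, -, -, rfl⟩; positivity⟩

lemma one_mem_comparisonSet (γ : Γ) {g : Γ} (hg : g ≤ 1) : (1 : ℝ) ∈ comparisonSet γ g :=
  ⟨1, 0, one_pos, by simpa using hg, by simp⟩

lemma realSize_nonneg (γ g : Γ) : 0 ≤ realSize γ g :=
  Real.sInf_nonneg (by rintro r ⟨m, n, -, -, rfl⟩; positivity)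

lemma realSize_le_exp {γ g : Γ} {m n : ℕ} (hm : 0 < m) (h : g ^ m ≤ γ ^ n) :
    realSize γ g ≤ Real.exp (-(n / m : ℝ)) :=
  csInf_le (comparisonSet_bddBelow γ g) ⟨m, n, hm, h, rfl⟩

lemma realSize_le_one (γ : Γ) {g : Γ} (hg : g ≤ 1) : realSize γ g ≤ 1 :=
  csInf_le (comparisonSet_bddBelow γ g) (one_mem_comparisonSet γ hg)

lemma realSize_mono (γ : Γ) {g h : Γ} (hgh : g ≤ h) (hh : h ≤ 1) :
    realSize γ g ≤ realSize γ h := by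
  refine csInf_le_csInf (comparisonSet_bddBelow γ g) ⟨1, one_mem_comparisonSet γ hh⟩ ?_
  rintro r ⟨m, n, hm, h, rfl⟩
  exact ⟨m, n, hm, (pow_le_pow_left₀ zero_le hgh m).trans h, rfl⟩

lemma realSize_eq_zero_of_forall_le {γ g : Γ} {m : ℕ} (hm : 0 < m) (h : ∀ n : ℕ, g ^ m ≤ γ ^ n) :
    realSize γ g = 0 := by
  refine le_antisymm ?_ (realSize_nonneg γ g)
  have hlim : Filter.Tendsto (fun n : ℕ => Real.exp (-(n / m : ℝ))) Filter.atTop (nhds 0) :=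
    Real.tendsto_exp_neg_atTop_nhds_zero.comp
      (tendsto_natCast_atTop_atTop.atTop_div_const (by positivity))
  exact ge_of_tendsto' hlim fun n => realSize_le_exp hm (h n)

lemma realSize_zero (γ : Γ) : realSize γ 0 = 0 :=
  realSize_eq_zero_of_forall_le one_pos fun n => by simp

lemma realSize_one {γ : Γ} (h1 : γ < 1) : realSize γ 1 = 1 := by
  refine le_antisymm (realSize_le_one γ le_rfl)
    (le_csInf ⟨1, one_mem_comparisonSet γ le_rfl⟩ ?_)
  rintro r ⟨m, n, hm, h, rfl⟩
  have hn : n = 0 := by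
    by_contra hn
    exact absurd h (by simpa using pow_lt_one₀ zero_le h1 hn)
  simp [hn]

lemma realSize_self_pos {γ : Γ} (h0 : 0 < γ) (h1 : γ < 1) : 0 < realSize γ γ := by
  refine (Real.exp_pos (-1)).trans_le (le_csInf ⟨1, one_mem_comparisonSet γ h1.le⟩ ?_)
  rintro r ⟨m, n, hm, h, rfl⟩
  have hnm : n ≤ m := (pow_le_pow_iff_right_of_lt_one₀ h0 h1).1 h
  have : (n / m : ℝ) ≤ 1 := div_le_one_of_le₀ (by exact_mod_cast hnm) (by positivity)
  gcongr

lemma realSize_lt_one {γ g : Γ} (hg : g ≤ γ) : realSize γ g < 1 :=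
  (realSize_le_exp (m := 1) (n := 1) one_pos (by simpa using hg)).trans_lt (by simp)

lemma exists_pow_lt_pow_le {γ g : Γ} (hg : g ≤ 1) {m : ℕ} (h : ¬ ∀ n : ℕ, g ^ m ≤ γ ^ n) :
    ∃ a : ℕ, g ^ m ≤ γ ^ a ∧ γ ^ (a + 1) < g ^ m := by
  classical
  push Not at h
  have h0 : Nat.find h ≠ 0 := fun h0 => by
    have := Nat.find_spec h
    rw [h0, pow_zero] at this
    exact absurd (pow_le_one₀ zero_le hg) this.not_ge
  obtain ⟨a, ha⟩ := Nat.exists_eq_succ_of_ne_zero h0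
  refine ⟨a, not_lt.1 (Nat.find_min h (by omega)), ?_⟩
  have := Nat.find_spec h
  rwa [ha] at this

lemma realSize_mul {γ g h : Γ} (h0 : 0 < γ) (h1 : γ < 1) (hg : g ≤ 1) (hh : h ≤ 1) :
    realSize γ (g * h) = realSize γ g * realSize γ h := by
  apply le_antisymm
  · have key : ∀ r ∈ comparisonSet γ g, ∀ s ∈ comparisonSet γ h, realSize γ (g * h) ≤ r * s := by
      rintro r ⟨m, n, hm, hr, rfl⟩ s ⟨m', n', hm', hs, rfl⟩
      have := realSize_le_exp (γ := γ) (g := g * h) (m := m * m') (n := n * m' + n' * m)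
        (by positivity) (by
          rw [mul_pow, pow_add, pow_mul, mul_comm m, pow_mul h, pow_mul γ, pow_mul γ]
          gcongr)
      refine this.trans_eq ?_
      rw [← Real.exp_add]
      congr 1
      push_cast
      field_simp
      ring
    have key2 : ∀ s ∈ comparisonSet γ h, realSize γ (g * h) ≤ realSize γ g * s := by
      intro s hs
      have hs0 : 0 < s := by obtain ⟨m, n, -, -, rfl⟩ := hs; positivity
      rw [← div_le_iff₀ hs0]
      exact le_csInf ⟨1, one_mem_comparisonSet γ hg⟩ fun r hr =>
        (div_le_iff₀ hs0).2 (key r hr s hs)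
    rcases (realSize_nonneg γ g).eq_or_lt with hz | hz
    · simpa [← hz] using key2 1 (one_mem_comparisonSet γ hh)
    · rw [← div_le_iff₀' hz]
      exact le_csInf ⟨1, one_mem_comparisonSet γ hh⟩ fun s hs =>
        (div_le_iff₀' hz).2 (key2 s hs)
  · refine le_csInf ⟨1, one_mem_comparisonSet γ (mul_le_one' hg hh)⟩ ?_
    rintro r ⟨m, n, hm, hr, rfl⟩
    have key : ∀ M : ℕ, realSize γ g * realSize γ h ≤
        Real.exp (-(n / m : ℝ) + 2 / ((M : ℝ) + 1)) := by
      intro M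
      by_cases hgM : ∀ a : ℕ, g ^ (M + 1) ≤ γ ^ a
      · rw [realSize_eq_zero_of_forall_le M.succ_pos hgM, zero_mul]; positivity
      by_cases hhM : ∀ a : ℕ, h ^ (M + 1) ≤ γ ^ a
      · rw [realSize_eq_zero_of_forall_le M.succ_pos hhM, mul_zero]; positivity
      obtain ⟨a, ha, ha'⟩ := exists_pow_lt_pow_le hg hgM
      obtain ⟨b, hb, hb'⟩ := exists_pow_lt_pow_le hh hhM
      have hle : γ ^ ((a + b + 2) * m) ≤ γ ^ (n * (M + 1)) := by
        calc γ ^ ((a + b + 2) * m) = (γ ^ (a + 1) * γ ^ (b + 1)) ^ m := by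
              rw [← pow_add, ← pow_mul]; congr 1; ring
          _ ≤ (g ^ (M + 1) * h ^ (M + 1)) ^ m := by gcongr
          _ = ((g * h) ^ m) ^ (M + 1) := by
              rw [← mul_pow, ← pow_mul, ← pow_mul, mul_comm m]
          _ ≤ (γ ^ n) ^ (M + 1) := by gcongr
          _ = γ ^ (n * (M + 1)) := by rw [pow_mul]
      have hnat : n * (M + 1) ≤ (a + b + 2) * m := (pow_le_pow_iff_right_of_lt_one₀ h0 h1).1 hle
      have hreal : (n : ℝ) * (M + 1) ≤ (a + b + 2) * m := by exact_mod_cast hnat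
      calc realSize γ g * realSize γ h
          ≤ Real.exp (-(a / (M + 1 : ℕ) : ℝ)) * Real.exp (-(b / (M + 1 : ℕ) : ℝ)) :=
            mul_le_mul (realSize_le_exp M.succ_pos ha) (realSize_le_exp M.succ_pos hb)
              (realSize_nonneg _ _) (Real.exp_pos _).le
        _ ≤ _ := by
            rw [← Real.exp_add]
            apply Real.exp_le_exp.2
            push_cast
            have hm' : (0 : ℝ) < m := by exact_mod_cast hm
            have : (n / m : ℝ) ≤ (a + b + 2) / (M + 1) := by
              rw [div_le_div_iff₀ hm' (by positivity)]; exact hreal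
            have e : ((a : ℝ) + b + 2) / (M + 1) = a / (M + 1) + b / (M + 1) + 2 / (M + 1) := by
              ring
            linarith
    have hlim : Filter.Tendsto (fun M : ℕ => Real.exp (-(n / m : ℝ) + 2 / ((M : ℝ) + 1)))
        Filter.atTop (nhds (Real.exp (-(n / m : ℝ)))) := by
      refine (Real.continuous_exp.tendsto _).comp ?_
      have := (tendsto_one_div_add_atTop_nhds_zero_nat (𝕜 := ℝ)).const_mul 2
      simpa [div_eq_mul_inv] using this.const_add (-(n / m : ℝ))
    exact ge_of_tendsto' hlim key

end RankOne

universe u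

/-- Given primes `p ≤ q` there is a valuation with support `p`, bounded by `1`, centered at `q`. -/
lemma exists_valuation_of_le {A : Type u} [CommRing A] (p q : Ideal A)
    [p.IsPrime] [q.IsPrime] (hpq : p ≤ q) :
    ∃ (K : Type u) (_ : Field K) (V : ValuationSubring K) (φ : A →+* K),
      (∀ a, φ a = 0 ↔ a ∈ p) ∧ (∀ a, V.valuation (φ a) ≤ 1) ∧
      ∀ a, V.valuation (φ a) < 1 ↔ a ∈ q := by
  let K := FractionRing (A ⧸ p)
  let φ : A →+* K := (algebraMap (A ⧸ p) K).comp (Ideal.Quotient.mk p)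
  have hφ : ∀ a, φ a = 0 ↔ a ∈ p := fun a => by
    simp [φ, Ideal.Quotient.eq_zero_iff_mem]
  have hu : ∀ y : q.primeCompl, IsUnit (φ y) := fun y =>
    isUnit_iff_ne_zero.2 fun h => y.2 (hpq ((hφ _).1 h))
  let ψ : Localization.AtPrime q →+* K := IsLocalization.lift hu
  have hψ : ∀ a, ψ (algebraMap A _ a) = φ a := fun a => IsLocalization.lift_eq hu a
  obtain ⟨V, hV, hloc⟩ := (LocalSubring.range ψ).exists_le_valuationSubring
  have hmem : ∀ a, φ a ∈ (LocalSubring.range ψ).toSubring := fun a => ⟨_, hψ a⟩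
  have hmemV : ∀ a, φ a ∈ V := fun a => hV (hmem a)
  refine ⟨K, inferInstance, V, φ, hφ, fun a => (V.valuation_le_one_iff _).2 (hmemV a), fun a => ?_⟩
  have hunit : V.valuation (φ a) = 1 ↔ a ∉ q := by
    rw [show φ a = ((⟨φ a, hmemV a⟩ : V) : K) from rfl, ← V.valuation_eq_one_iff]
    have := IsLocalHom.of_surjective ψ.rangeRestrict ψ.rangeRestrict_surjective
    constructor
    · intro h
      have h1 : IsUnit (⟨φ a, hmem a⟩ : (LocalSubring.range ψ).toSubring) :=
        hloc.map_nonunit _ h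
      have h2 : IsUnit (ψ.rangeRestrict (algebraMap A _ a)) := by
        exact (congrArg IsUnit (Subtype.ext (hψ a) :
          ψ.rangeRestrict (algebraMap A _ a) = ⟨φ a, hmem a⟩)).mpr h1
      have h3 := this.map_nonunit _ h2
      exact (IsLocalization.AtPrime.isUnit_to_map_iff (Localization.AtPrime q) q a).1 h3
    · intro h
      have h3 := (IsLocalization.AtPrime.isUnit_to_map_iff (Localization.AtPrime q) q a).2 h
      have h1 := (h3.map ψ.rangeRestrict).map (Subring.inclusion hV)
      exact (congrArg IsUnit (Subtype.ext (hψ a).symm :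
        (⟨φ a, hmemV a⟩ : V) = Subring.inclusion hV (ψ.rangeRestrict (algebraMap A _ a)))).mpr h1
  have hle := (V.valuation_le_one_iff _).2 (hmemV a)
  rw [lt_iff_le_and_ne, Ne, hunit, not_not]
  exact and_iff_right hle

open Classical in
/-- The function equal to `0` on `p` and to `1` off `p`. -/
noncomputable def trivialSeminorm {A : Type*} [CommRing A] (p : Ideal A) (a : A) : ℝ :=
  if a ∈ p then 0 else 1

open Classical in
/-- Given primes `p < q` of a Noetherian ring, there is a prime `p'` with `p ≤ p' < q` which is the
kernel of a multiplicative non-archimedean seminorm bounded by `1` and centered at `q`. -/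
lemma exists_nonarchimedean_seminorm {A : Type*} [CommRing A] [IsNoetherianRing A]
    (p q : Ideal A) [p.IsPrime] [q.IsPrime] (hpq : p < q) :
    ∃ (p' : Ideal A) (x : A → ℝ), p'.IsPrime ∧ p ≤ p' ∧ p' < q ∧ x 1 = 1 ∧
      (∀ a b, x (a * b) = x a * x b) ∧ (∀ a b, x (a + b) ≤ max (x a) (x b)) ∧
      (∀ a, 0 ≤ x a) ∧ (∀ a, x a ≤ 1) ∧ (∀ a, x a < 1 ↔ a ∈ q) ∧ ∀ a, x a = 0 ↔ a ∈ p' := by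
  obtain ⟨K, _, V, φ, hφ, hle, hlt⟩ := exists_valuation_of_le p q hpq.le
  obtain ⟨f, hfq, hmax⟩ : ∃ f ∈ q, ∀ a ∈ q, V.valuation (φ a) ≤ V.valuation (φ f) := by
    obtain ⟨s, hs⟩ := (isNoetherianRing_iff_ideal_fg A).1 inferInstance q
    have hne : (insert 0 s).Nonempty := Finset.insert_nonempty 0 s
    obtain ⟨f, hf, hmax⟩ := Finset.exists_max_image (insert 0 s) (fun a => V.valuation (φ a)) hne
    refine ⟨f, ?_, fun a ha => ?_⟩
    · rcases Finset.mem_insert.1 hf with rfl | hf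
      · exact q.zero_mem
      · exact hs ▸ Ideal.subset_span hf
    · rw [← hs] at ha
      induction ha using Submodule.span_induction with
      | mem a ha => exact hmax a (Finset.mem_insert_of_mem ha)
      | zero => simp
      | add a b _ _ ha hb =>
        rw [map_add]
        exact (V.valuation.map_add _ _).trans (max_le ha hb)
      | smul c a _ ha =>
        rw [smul_eq_mul, map_mul, map_mul]
        exact mul_le_of_le_one_of_le (hle c) ha
  set γ := V.valuation (φ f) with hγ
  have h1 : γ < 1 := (hlt f).2 hfq
  have h0 : 0 < γ := by
    obtain ⟨b, hbq, hbp⟩ := Set.exists_of_ssubset hpq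
    refine lt_of_lt_of_le (zero_lt_iff.2 ?_) (hmax b hbq)
    rwa [Ne, map_eq_zero, hφ]
  have hmul : ∀ a b, realSize γ (V.valuation (φ (a * b))) =
      realSize γ (V.valuation (φ a)) * realSize γ (V.valuation (φ b)) := fun a b => by
    rw [map_mul, map_mul, realSize_mul h0 h1 (hle a) (hle b)]
  have hadd : ∀ a b, realSize γ (V.valuation (φ (a + b))) ≤
      max (realSize γ (V.valuation (φ a))) (realSize γ (V.valuation (φ b))) := fun a b => by
    have h := V.valuation.map_add (φ a) (φ b)
    rw [← map_add] at h
    rcases le_max_iff.1 h with h | h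
    · exact le_max_of_le_left (realSize_mono γ h (hle a))
    · exact le_max_of_le_right (realSize_mono γ h (hle b))
  have hone : realSize γ (V.valuation (φ 1)) = 1 := by simp [realSize_one h1]
  have hcenter : ∀ a, realSize γ (V.valuation (φ a)) < 1 ↔ a ∈ q := fun a => by
    refine ⟨fun h => ?_, fun h => realSize_lt_one (hmax a h)⟩
    by_contra ha
    have : V.valuation (φ a) = 1 := (hle a).eq_of_not_lt fun h => ha ((hlt a).1 h)
    rw [this, realSize_one h1] at h
    exact h.false
  let p' : Ideal A :=
    { carrier := {a | realSize γ (V.valuation (φ a)) = 0}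
      add_mem' := fun {a b} ha hb => le_antisymm
        ((hadd a b).trans (max_le (le_of_eq ha) (le_of_eq hb))) (realSize_nonneg _ _)
      zero_mem' := by simp [realSize_zero]
      smul_mem' := fun c a ha => by
        rw [Set.mem_ofPred_eq] at ha
        simp only [smul_eq_mul, Set.mem_ofPred_eq, hmul, ha, mul_zero] }
  have hp' : ∀ a, realSize γ (V.valuation (φ a)) = 0 ↔ a ∈ p' := fun a => Iff.rfl
  refine ⟨p', fun a => realSize γ (V.valuation (φ a)), ⟨?_, ?_⟩, ?_, ?_, hone, hmul, hadd,
    fun a => realSize_nonneg _ _, fun a => realSize_le_one γ (hle a), hcenter, hp'⟩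
  · rw [Ideal.ne_top_iff_one, ← hp', hone]
    exact one_ne_zero
  · intro a b hab
    rwa [← hp', hmul, mul_eq_zero] at hab
  · intro a ha
    rw [← hp', (hφ a).2 ha, map_zero, realSize_zero]
  · refine lt_of_le_of_ne (fun a ha => (hcenter a).1 ?_) fun h => ?_
    · rw [(hp' a).2 ha]
      exact one_pos
    · rw [← h, ← hp'] at hfq
      exact (realSize_self_pos h0 h1).ne' hfq

section Paths

variable {k A : Type*} [CommRing k] [CommRing A] [Algebra k A] {absk : k → ℝ}

lemma joinedIn_of_curve {c : ℝ → A → ℝ}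
    (hcont : ∀ a, ContinuousOn (fun t => c t a) (Set.Icc 0 1))
    (hmem : ∀ t ∈ Set.Icc (0 : ℝ) 1, c t ∈ berkovichSpectrum k A absk) :
    JoinedIn (berkovichSpectrum k A absk) (c 0) (c 1) := by
  refine JoinedIn.ofLine (f := c) (continuousOn_pi.2 hcont) rfl rfl ?_
  rintro _ ⟨t, ht, rfl⟩
  exact hmem t ht

open Classical in
/-- A seminorm is joined, through its powers, to the trivial seminorm with the same kernel. -/
lemma joinedIn_trivialSeminorm_of_ker (habs : ∀ c : k, c ≠ 0 → 1 ≤ absk c) {x : A → ℝ}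
    (hx : x ∈ berkovichSpectrum k A absk) {p : Ideal A} (hp : ∀ a, x a = 0 ↔ a ∈ p) :
    JoinedIn (berkovichSpectrum k A absk) (trivialSeminorm p) x := by
  obtain ⟨h0, h1, hmul, hadd, hnn, hbd⟩ := hx
  let c : ℝ → A → ℝ := fun t a => if x a = 0 then 0 else x a ^ t
  have hc0 : ∀ t a, x a = 0 → c t a = 0 := fun t a h => if_pos h
  have hc : ∀ t a, x a ≠ 0 → c t a = x a ^ t := fun t a h => if_neg h
  have hcnn : ∀ t a, 0 ≤ c t a := fun t a => by
    by_cases h : x a = 0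
    · rw [hc0 t a h]
    · rw [hc t a h]; exact Real.rpow_nonneg (hnn a) t
  have key : JoinedIn (berkovichSpectrum k A absk) (c 0) (c 1) := by
    refine joinedIn_of_curve (fun a => ?_) fun t ht => ⟨hc0 t 0 h0, ?_, fun a b => ?_,
      fun a b => ?_, hcnn t, fun r => ?_⟩
    · by_cases h : x a = 0
      · simp only [hc0 _ a h]
        exact continuousOn_const
      · simp only [hc _ a h]
        exact (Real.continuous_const_rpow h).continuousOn
    · rw [hc t 1 (by simp [h1]), h1, Real.one_rpow]
    · by_cases ha : x a = 0
      · rw [hc0 t a ha, hc0 t _ (by rw [hmul, ha, zero_mul]), zero_mul]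
      by_cases hb : x b = 0
      · rw [hc0 t b hb, hc0 t _ (by rw [hmul, hb, mul_zero]), mul_zero]
      rw [hc t a ha, hc t b hb, hc t _ (by rw [hmul]; exact mul_ne_zero ha hb), hmul,
        Real.mul_rpow (hnn a) (hnn b)]
    · by_cases hab : x (a + b) = 0
      · rw [hc0 t _ hab]
        exact add_nonneg (hcnn t a) (hcnn t b)
      rw [hc t _ hab]
      by_cases ha : x a = 0
      · have hle : x (a + b) ≤ x b := by simpa [ha] using hadd a b
        have hb : x b ≠ 0 := fun hb => hab (le_antisymm (hb ▸ hle) (hnn _))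
        rw [hc0 t a ha, hc t b hb, zero_add]
        exact Real.rpow_le_rpow (hnn _) hle ht.1
      by_cases hb : x b = 0
      · have hle : x (a + b) ≤ x a := by simpa [hb] using hadd a b
        rw [hc0 t b hb, hc t a ha, add_zero]
        exact Real.rpow_le_rpow (hnn _) hle ht.1
      rw [hc t a ha, hc t b hb]
      exact (Real.rpow_le_rpow (hnn _) (hadd a b) ht.1).trans
        (Real.rpow_add_le_add_rpow (hnn a) (hnn b) ht.1 ht.2)
    · by_cases hr : x (algebraMap k A r) = 0
      · rw [hc0 t _ hr]
        exact (hnn _).trans (hbd r)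
      · have hr0 : r ≠ 0 := by
          rintro rfl
          exact hr (by rw [map_zero, h0])
        rw [hc t _ hr]
        calc x (algebraMap k A r) ^ t ≤ absk r ^ t := Real.rpow_le_rpow (hnn _) (hbd r) ht.1
          _ ≤ absk r ^ (1 : ℝ) := Real.rpow_le_rpow_of_exponent_le (habs r hr0) ht.2
          _ = absk r := Real.rpow_one _
  convert key using 1
  · funext a
    simp [c, trivialSeminorm, ← hp]
  · funext a
    by_cases h : x a = 0 <;> simp [c, h]

lemma trivialSeminorm_mem (habs : ∀ c : k, c ≠ 0 → 1 ≤ absk c) (habs0 : 0 ≤ absk 0)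
    (p : Ideal A) [hp : p.IsPrime] : trivialSeminorm p ∈ berkovichSpectrum k A absk := by
  have h1 : (1 : A) ∉ p := (Ideal.ne_top_iff_one p).1 hp.ne_top
  have hnn : ∀ a, 0 ≤ trivialSeminorm p a := fun a => by unfold trivialSeminorm; split_ifs <;> simp
  refine ⟨by simp [trivialSeminorm], by simp [trivialSeminorm, h1], fun a b => ?_, fun a b => ?_,
    hnn, fun r => ?_⟩
  · have := hp.mul_mem_iff_mem_or_mem (x := a) (y := b)
    by_cases ha : a ∈ p <;> by_cases hb : b ∈ p <;> simp_all [trivialSeminorm]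
  · by_cases ha : a ∈ p
    · by_cases hb : b ∈ p
      · simp [trivialSeminorm, ha, hb, p.add_mem ha hb]
      · simp [trivialSeminorm, ha, hb, (p.add_mem_iff_right ha).not.2 hb]
    · refine le_trans ?_ (le_add_of_nonneg_right (hnn b))
      simp only [trivialSeminorm, if_neg ha]
      split_ifs <;> simp
  · rcases eq_or_ne r 0 with rfl | hr
    · simpa [trivialSeminorm] using habs0
    · refine le_trans ?_ (habs r hr)
      unfold trivialSeminorm
      split_ifs <;> simp

open Classical in
/-- The trivial seminorms attached to the kernel and to the center of a non-archimedean
multiplicative seminorm bounded by `1` are joined through the powers of that seminorm. -/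
lemma joinedIn_trivialSeminorm_center (habs : ∀ c : k, c ≠ 0 → 1 ≤ absk c) (habs0 : 0 ≤ absk 0)
    {x : A → ℝ} {p q : Ideal A} (h1 : x 1 = 1)
    (hmul : ∀ a b, x (a * b) = x a * x b) (hadd : ∀ a b, x (a + b) ≤ max (x a) (x b))
    (hnn : ∀ a, 0 ≤ x a) (hle : ∀ a, x a ≤ 1) (hq : ∀ a, x a < 1 ↔ a ∈ q)
    (hp : ∀ a, x a = 0 ↔ a ∈ p) :
    JoinedIn (berkovichSpectrum k A absk) (trivialSeminorm q) (trivialSeminorm p) := by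
  let c : ℝ → A → ℝ := fun t a => if x a = 0 then 0 else t ^ (-Real.log (x a))
  have hc0 : ∀ t a, x a = 0 → c t a = 0 := fun t a h => if_pos h
  have hc : ∀ t a, x a ≠ 0 → c t a = t ^ (-Real.log (x a)) := fun t a h => if_neg h
  have hlog : ∀ a, 0 ≤ -Real.log (x a) := fun a =>
    neg_nonneg.2 (Real.log_nonpos (hnn a) (hle a))
  have hx0 : x 0 = 0 := (hp 0).2 p.zero_mem
  have hcnn : ∀ t, 0 ≤ t → ∀ a, 0 ≤ c t a := fun t ht a => by
    by_cases h : x a = 0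
    · rw [hc0 t a h]
    · rw [hc t a h]; exact Real.rpow_nonneg ht _
  have hmono : ∀ t ∈ Set.Icc (0 : ℝ) 1, ∀ a b, x a ≤ x b → c t a ≤ c t b := by
    intro t ht a b hab
    by_cases ha : x a = 0
    · rw [hc0 t a ha]; exact hcnn t ht.1 b
    have ha' : 0 < x a := (hnn a).lt_of_ne' ha
    rw [hc t a ha, hc t b (ha'.trans_le hab).ne']
    exact Real.rpow_le_rpow_of_exponent_ge' ht.1 ht.2 (hlog b)
      (neg_le_neg (Real.log_le_log ha' hab))
  have hle1 : ∀ t ∈ Set.Icc (0 : ℝ) 1, ∀ a, c t a ≤ 1 := by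
    intro t ht a
    by_cases ha : x a = 0
    · rw [hc0 t a ha]; exact zero_le_one
    · rw [hc t a ha]; exact Real.rpow_le_one ht.1 ht.2 (hlog a)
  have key : JoinedIn (berkovichSpectrum k A absk) (c 0) (c 1) := by
    refine joinedIn_of_curve (fun a => ?_) fun t ht => ⟨hc0 t 0 hx0, ?_, fun a b => ?_,
      fun a b => ?_, hcnn t ht.1, fun r => ?_⟩
    · by_cases h : x a = 0
      · simp only [hc0 _ a h]
        exact continuousOn_const
      · simp only [hc _ a h]
        exact (Real.continuous_rpow_const (hlog a)).continuousOn
    · rw [hc t 1 (by simp [h1]), h1, Real.log_one, neg_zero, Real.rpow_zero]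
    · by_cases ha : x a = 0
      · rw [hc0 t a ha, hc0 t _ (by rw [hmul, ha, zero_mul]), zero_mul]
      by_cases hb : x b = 0
      · rw [hc0 t b hb, hc0 t _ (by rw [hmul, hb, mul_zero]), mul_zero]
      rw [hc t a ha, hc t b hb, hc t _ (by rw [hmul]; exact mul_ne_zero ha hb), hmul,
        Real.log_mul ha hb, neg_add, Real.rpow_add_of_nonneg ht.1 (hlog a) (hlog b)]
    · rcases le_max_iff.1 (hadd a b) with h | h
      · exact (hmono t ht _ _ h).trans (le_add_of_nonneg_right (hcnn t ht.1 b))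
      · exact (hmono t ht _ _ h).trans (le_add_of_nonneg_left (hcnn t ht.1 a))
    · rcases eq_or_ne r 0 with rfl | hr
      · rw [map_zero, hc0 t 0 hx0]
        exact habs0
      · exact (hle1 t ht _).trans (habs r hr)
  convert key using 1
  · funext a
    by_cases ha : x a = 0
    · rw [hc0 0 a ha]
      simp [trivialSeminorm, (hq a).1 (by rw [ha]; exact one_pos)]
    rw [hc 0 a ha]
    rcases (hle a).lt_or_eq with h | h
    · have : Real.log (x a) < 0 := Real.log_neg ((hnn a).lt_of_ne' ha) h
      rw [Real.zero_rpow (by linarith)]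
      simp [trivialSeminorm, (hq a).1 h]
    · have : a ∉ q := fun h' => ((hq a).2 h').ne h
      simp [trivialSeminorm, this, h]
  · funext a
    simp [c, trivialSeminorm, ← hp]

/-- Over a Noetherian ring, the trivial seminorms of two nested primes are joined. -/
lemma joinedIn_trivialSeminorm_of_le [IsNoetherianRing A] (habs : ∀ c : k, c ≠ 0 → 1 ≤ absk c)
    (habs0 : 0 ≤ absk 0) (p : Ideal A) [hp : p.IsPrime] (q : Ideal A) [hq : q.IsPrime]
    (hpq : p ≤ q) :
    JoinedIn (berkovichSpectrum k A absk) (trivialSeminorm q) (trivialSeminorm p) := by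
  induction hn : q.height using WellFoundedLT.induction generalizing q with
  | ind n ih =>
    rcases hpq.eq_or_lt with rfl | hlt
    · exact JoinedIn.refl (trivialSeminorm_mem habs habs0 p)
    obtain ⟨p', x, hp', hle, hlt', h1, hmul, hadd, hnn, hle1, hcenter, hker⟩ :=
      exists_nonarchimedean_seminorm p q hlt
    have hh : p'.height < n := hn ▸ Ideal.height_strict_mono_of_isPrime_of_isPrime hlt'
    exact (joinedIn_trivialSeminorm_center habs habs0 h1 hmul hadd hnn hle1 hcenter hker).trans
      (ih _ hh p' hle rfl)

/-- In a Noetherian ring with connected spectrum, an equivalence relation on primes which contains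
all specializations relates any two primes. -/
lemma PrimeSpectrum.rel_of_connectedSpace [IsNoetherianRing A] [ConnectedSpace (PrimeSpectrum A)]
    (P : PrimeSpectrum A → PrimeSpectrum A → Prop) (hsymm : ∀ p q, P p q → P q p)
    (htrans : ∀ p q r, P p q → P q r → P p r) (hle : ∀ p q, p ≤ q → P p q)
    (p q : PrimeSpectrum A) : P p q := by
  have : Std.Symm P := ⟨hsymm⟩
  refine PreconnectedSpace.induction₂ P (fun x => ?_) ⟨htrans⟩ p q
  have hopen : ∀ m ∈ minimalPrimes A, ∀ᶠ y : PrimeSpectrum A in nhds x,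
      m ≤ y.asIdeal → m ≤ x.asIdeal := by
    intro m _
    by_cases hm : m ≤ x.asIdeal
    · exact Filter.Eventually.of_forall fun _ _ => hm
    · have : (PrimeSpectrum.zeroLocus (m : Set A))ᶜ ∈ nhds x :=
        (PrimeSpectrum.isClosed_zeroLocus _).isOpen_compl.mem_nhds hm
      filter_upwards [this] with y hy hmy using absurd hmy hy
  filter_upwards [(Filter.eventually_all_finite
    (minimalPrimes.finite_of_isNoetherianRing A)).2 hopen] with y hy
  obtain ⟨m, hm, hmy⟩ := Ideal.exists_minimalPrimes_le (I := ⊥) (J := y.asIdeal) bot_le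
  let m' : PrimeSpectrum A := ⟨m, hm.1.1⟩
  exact htrans x m' y (hsymm _ _ (hle m' x (hy m hm hmy))) (hle m' y hmy)

/-- The kernel of a multiplicative seminorm is a prime ideal. -/
lemma exists_prime_ker {x : A → ℝ} (hx : x ∈ berkovichSpectrum k A absk) :
    ∃ p : PrimeSpectrum A, ∀ a, x a = 0 ↔ a ∈ p.asIdeal := by
  obtain ⟨h0, h1, hmul, hadd, hnn, -⟩ := hx
  refine ⟨⟨{ carrier := {a | x a = 0}
             add_mem' := fun {a b} ha hb => le_antisymm ?_ (hnn _)
             zero_mem' := h0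
             smul_mem' := fun c a ha => ?_ }, ⟨?_, ?_⟩⟩, fun a => Iff.rfl⟩
  · rw [Set.mem_ofPred_eq] at ha hb
    simpa [ha, hb] using hadd a b
  · rw [Set.mem_ofPred_eq] at ha
    simp only [smul_eq_mul, Set.mem_ofPred_eq, hmul, ha, mul_zero]
  · rw [Ideal.ne_top_iff_one]
    change x 1 ≠ 0
    simp [h1]
  · intro a b hab
    change x (a * b) = 0 at hab
    rwa [hmul, mul_eq_zero] at hab

end Paths

/-- Let `k` be either the ring `ℤ` with the usual archimedean absolute value or
a field with the trivial absolute value (which is `1` on all nonzero elements), and let `A` be a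
nonzero finitely generated `k`-algebra with `Spec A` connected.  Then the Berkovich spectrum
`ℳ(A)` of multiplicative seminorms on `A` bounded on `k` is path-connected. -/
theorem stmt_7 (k A : Type*) [CommRing k] [CommRing A] [Algebra k A]
    [Nontrivial A] [Algebra.FiniteType k A]
    (absk : k → ℝ)
    (hk : (∃ e : k ≃+* ℤ, ∀ c : k, absk c = |((e c : ℤ) : ℝ)|) ∨
          (IsField k ∧ absk 0 = 0 ∧ ∀ c : k, c ≠ 0 → absk c = 1))
    (hconn : ConnectedSpace (PrimeSpectrum A)) :
    PathConnectedSpace ↥(berkovichSpectrum k A absk) := by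
  have hnoeth : IsNoetherianRing k := by
    rcases hk with ⟨e, -⟩ | ⟨hf, -⟩
    · exact isNoetherianRing_of_ringEquiv ℤ e.symm
    · let := hf.toField
      infer_instance
  have : IsNoetherianRing A := Algebra.FiniteType.isNoetherianRing k A
  have habs : ∀ c : k, c ≠ 0 → 1 ≤ absk c := by
    intro c hc
    rcases hk with ⟨e, he⟩ | ⟨-, -, h1⟩
    · rw [he]
      exact_mod_cast Int.one_le_abs ((map_ne_zero_iff e e.injective).2 hc)
    · exact (h1 c hc).ge
  have habs0 : 0 ≤ absk 0 := by
    rcases hk with ⟨e, he⟩ | ⟨-, h0, -⟩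
    · rw [he]
      exact abs_nonneg _
    · exact h0.ge
  have htriv : ∀ p q : PrimeSpectrum A, JoinedIn (berkovichSpectrum k A absk)
      (trivialSeminorm p.asIdeal) (trivialSeminorm q.asIdeal) :=
    PrimeSpectrum.rel_of_connectedSpace _ (fun _ _ h => h.symm) (fun _ _ _ h h' => h.trans h')
      fun p q hpq => (joinedIn_trivialSeminorm_of_le habs habs0 p.asIdeal q.asIdeal hpq).symm
  obtain ⟨p⟩ := hconn.toNonempty
  refine isPathConnected_iff_pathConnectedSpace.1
    ⟨trivialSeminorm p.asIdeal, trivialSeminorm_mem habs habs0 p.asIdeal, fun {x} hx => ?_⟩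
  obtain ⟨q, hq⟩ := exists_prime_ker hx
  exact (htriv p q).trans (joinedIn_trivialSeminorm_of_ker habs hx hq)
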